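/- Fix an integer s ≥ 2. Define r : ℤ → ℚ by r(n) = 1/n! for n ≥ 0 and r(n) = 0 for n < 0. Let (i₁,…,i_{2s+1}) be given by i₁ = i₂ = 2, i_j = 1 for 3 ≤ j ≤ 2s−2, and i_{2s−1} = i_{2s} = i_{2s+1} = 0. Then the determinant of the (2s+1)×(2s+1) matrix with (j,ℓ)-entry r(s − 1 + i_j − j + ℓ) equals (s(2s+1)²(2s−3)(s+1)²(s+2)/(9(3s+1)))·∏_{k=0}^{2s} k!/(s+k)!. -/

import Mathlib

/-!
Factoring `1 / L_j!` out of row `j`, where `L_j` is its largest argument of `r`, leaves a matrix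
whose entries are the falling factorials `L_j (L_j - 1) ⋯ (L_j - c + 1)`. These are monic
polynomials of degree `c` in `L_j`, so for any naturals `L_j`
`det (r(L_j - c)) = ∏_j (∏_{i<j} (L_j - L_i)) / L_j!` (`det_rfact_sub`).

Reversing rows and columns makes the `L_j` increasing: with `s = m + 2` they are
`m + 1 + gapSeq m j`, where `gapSeq m` enumerates `{0, …, 2m+6}` without `3` and `2m+4`. The `j`-th
factor of the product is then the corresponding factor `j! / (s+j)!` of the right-hand side times
an explicit rational number `rowRatio m j` (`row_factor`). The product of these ratios telescopes
to the stated prefactor (`prod_rowRatio`).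
-/

/-- `r(n) = 1/n!` for `n ≥ 0` and `r(n) = 0` for `n < 0`. -/
def rfact (n : ℤ) : ℚ := if 0 ≤ n then 1 / (Nat.factorial n.toNat : ℚ) else 0

open Finset Nat

lemma rfact_sub (L c : ℕ) :
    rfact ((L : ℤ) - c) = 1 / (L ! : ℚ) * (descPochhammer ℚ c).eval (L : ℚ) := by
  rw [descPochhammer_eval_eq_descFactorial]
  unfold rfact
  split_ifs with h
  · have hc : c ≤ L := by omega
    have h1 : ((L : ℤ) - c).toNat = L - c := by omega
    rw [h1, ← Nat.factorial_mul_descFactorial hc]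
    have h2 : ((L - c)! : ℚ) ≠ 0 := by positivity
    have h3 : (L.descFactorial c : ℚ) ≠ 0 := by
      have := Nat.descFactorial_eq_zero_iff_lt (n := L) (k := c)
      exact_mod_cast fun h => absurd (this.1 h) (by omega)
    push_cast
    field_simp
  · rw [Nat.descFactorial_eq_zero_iff_lt.2 (by omega)]
    simp

/-- A Vandermonde evaluation, valid without any monotonicity or lower bound on `L`. -/
lemma det_rfact_sub (n : ℕ) (L : ℕ → ℕ) :
    Matrix.det (Matrix.of fun j c : Fin n => rfact ((L j : ℤ) - (c : ℕ))) =
      ∏ j ∈ range n, (∏ i ∈ range j, ((L j : ℚ) - L i)) / ((L j)! : ℚ) := by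
  simp only [rfact_sub]
  have h1 := Matrix.det_mul_column (fun j : Fin n => 1 / ((L j)! : ℚ))
    (Matrix.of fun j c : Fin n => (descPochhammer ℚ c).eval (L j : ℚ))
  simp only [Matrix.of_apply] at h1
  rw [h1, ← Matrix.det_eval_matrixOfPolynomials_eq_det_vandermonde (fun j : Fin n => (L j : ℚ))
    (fun c => descPochhammer ℚ c) (fun c => descPochhammer_natDegree ℚ c)
    (fun c => monic_descPochhammer ℚ c), Matrix.det_vandermonde,
    Finset.prod_comm' (t' := univ) (s' := fun j => Iio j) (by simp), ← Finset.prod_mul_distrib,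
    ← Fin.prod_univ_eq_prod_range]
  refine Finset.prod_congr rfl fun j _ => ?_
  rw [← Nat.Iio_eq_range, ← Fin.map_valEmbedding_Iio, Finset.prod_map]
  simp only [Fin.valEmbedding_apply]
  ring

/-- The increasing enumeration of `{0, …, 2m+6} \ {3, 2m+4}` (for indices `< 2m+5`). -/
def gapSeq (m i : ℕ) : ℕ := if i < 3 then i else if i < 2 * m + 3 then i + 1 else i + 2

/-- The `j`-th factor of the evaluated determinant divided by `j! / (m+2+j)!`. -/
def rowRatio (m j : ℕ) : ℚ :=
  if j < 3 then m + 2 + j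
  else if j < 2 * m + 3 then (j + 1) / (j - 2)
  else if j = 2 * m + 3 then (2 * m + 5) * (2 * m + 4) / ((2 * m + 2) * (3 * m + 6))
  else (2 * m + 6) * (2 * m + 5) / (2 * (2 * m + 3) * (3 * m + 7))

lemma prod_add_sub (n c : ℕ) :
    ∏ k ∈ range n, ((n : ℚ) + c - k) = ((n + c)! : ℚ) / (c ! : ℚ) := by
  induction n with
  | zero => simp [div_self (show (c ! : ℚ) ≠ 0 by positivity)]
  | succ n ih =>
    rw [Finset.prod_range_succ']
    have : ∀ k ∈ range n, (((n + 1 : ℕ) : ℚ) + c - ((k + 1 : ℕ) : ℚ)) = (n : ℚ) + c - k := by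
      intro k _
      push_cast
      ring
    rw [Finset.prod_congr rfl this, ih, show n + 1 + c = (n + c) + 1 by ring,
      Nat.factorial_succ]
    push_cast
    ring

/-- Differences from a point `x` to the first `n + 3` terms, all of which precede the second
gap. -/
lemma prod_sub_gapSeq (m n : ℕ) (hn : n ≤ 2 * m) (x : ℚ) :
    ∏ i ∈ range (n + 3), (x - gapSeq m i) =
      x * (x - 1) * (x - 2) * ∏ k ∈ range n, (x - 4 - k) := by
  rw [add_comm n 3, Finset.prod_range_add]
  congr 1
  · simp [Finset.prod_range_succ, gapSeq]
  · refine Finset.prod_congr rfl fun k hk => ?_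
    rw [Finset.mem_range] at hk
    rw [gapSeq, if_neg (by omega), if_pos (by omega)]
    push_cast
    ring

lemma row_factor (m j : ℕ) (hj : j < 2 * m + 5) :
    (∏ i ∈ range j, (((m + 1 + gapSeq m j : ℕ) : ℚ) - ((m + 1 + gapSeq m i : ℕ) : ℚ))) /
        ((m + 1 + gapSeq m j)! : ℚ) =
      rowRatio m j * ((j ! : ℚ) / ((m + 2 + j)! : ℚ)) := by
  have h0 : ∀ i, ((m + 1 + gapSeq m j : ℕ) : ℚ) - ((m + 1 + gapSeq m i : ℕ) : ℚ) =
      (gapSeq m j : ℚ) - gapSeq m i := by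
    intro i
    push_cast
    ring
  simp only [h0]
  rcases lt_or_ge j 3 with h3 | h3
  · have e : gapSeq m j = j := by simp [gapSeq, h3]
    have hp : ∏ i ∈ range j, ((j : ℚ) - gapSeq m i) = (j ! : ℚ) := by
      have := prod_add_sub j 0
      simp only [Nat.cast_zero, add_zero, Nat.factorial_zero, Nat.cast_one, div_one] at this
      rw [← this]
      refine Finset.prod_congr rfl fun i hi => ?_
      rw [Finset.mem_range] at hi
      rw [gapSeq, if_pos (by omega)]
    rw [e, hp, rowRatio, if_pos h3, show m + 2 + j = (m + 1 + j) + 1 by ring,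
      Nat.factorial_succ]
    have : ((m + 1 + j)! : ℚ) ≠ 0 := by positivity
    have : (m : ℚ) + 2 + j ≠ 0 := by positivity
    have : (m : ℚ) + 1 + j + 1 ≠ 0 := by positivity
    push_cast
    field_simp
    ring
  rcases lt_or_ge j (2 * m + 3) with hK | hK
  · obtain ⟨n, rfl⟩ := Nat.exists_eq_add_of_le' h3
    have e : gapSeq m (n + 3) = n + 4 := by
      rw [gapSeq, if_neg (by omega), if_pos hK]
    have hp := prod_add_sub n 0
    simp only [Nat.cast_zero, add_zero, Nat.factorial_zero, Nat.cast_one, div_one] at hp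
    rw [e, prod_sub_gapSeq m n (by omega)]
    have : ∀ k : ℕ, ((n + 4 : ℕ) : ℚ) - 4 - k = (n : ℚ) - k := by
      intro k
      push_cast
      ring
    simp only [this]
    rw [hp, rowRatio, if_neg (by omega), if_pos hK,
      show m + 2 + (n + 3) = m + 1 + (n + 4) by ring]
    simp only [Nat.factorial_succ n, Nat.factorial_succ (n + 1), Nat.factorial_succ (n + 2)]
    have : ((m + 1 + (n + 4))! : ℚ) ≠ 0 := by positivity
    have : (n : ℚ) + 3 - 2 = n + 1 := by ring
    push_cast
    rw [this]
    field_simp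
    ring
  have hf3 : ((2 * m + 3)! : ℚ) = (2 * m + 3) * (2 * m + 2) * (2 * m + 1)! := by
    rw [Nat.factorial_succ, Nat.factorial_succ]
    push_cast
    ring
  have hf2 : ((2 * m + 2)! : ℚ) = (2 * m + 2) * (2 * m + 1)! := by
    rw [Nat.factorial_succ]
    push_cast
    ring
  obtain rfl | rfl : j = 2 * m + 3 ∨ j = 2 * m + 4 := by omega
  · have e : gapSeq m (2 * m + 3) = 2 * m + 5 := by
      rw [gapSeq, if_neg (by omega), if_neg (by omega)]
    have hp := prod_add_sub (2 * m) 1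
    rw [e, prod_sub_gapSeq m (2 * m) le_rfl]
    have : ∀ k : ℕ, ((2 * m + 5 : ℕ) : ℚ) - 4 - k = ((2 * m : ℕ) : ℚ) + (1 : ℕ) - k := by
      intro k
      push_cast
      ring
    simp only [this]
    rw [hp, rowRatio, if_neg (by omega), if_neg (by omega), if_pos rfl,
      show m + 1 + (2 * m + 5) = (3 * m + 5) + 1 by ring,
      show m + 2 + (2 * m + 3) = 3 * m + 5 by ring, Nat.factorial_succ (3 * m + 5), hf3]
    have : ((3 * m + 5)! : ℚ) ≠ 0 := by positivity
    push_cast [Nat.factorial_one]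
    field_simp
    ring
  · have e : gapSeq m (2 * m + 4) = 2 * m + 6 := by
      rw [gapSeq, if_neg (by omega), if_neg (by omega)]
    have e' : gapSeq m (2 * m + 3) = 2 * m + 5 := by
      rw [gapSeq, if_neg (by omega), if_neg (by omega)]
    have hp := prod_add_sub (2 * m) 2
    rw [e, Finset.prod_range_succ, e', prod_sub_gapSeq m (2 * m) le_rfl]
    have : ∀ k : ℕ, ((2 * m + 6 : ℕ) : ℚ) - 4 - k = ((2 * m : ℕ) : ℚ) + (2 : ℕ) - k := by
      intro k
      push_cast
      ring
    simp only [this]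
    rw [hp, rowRatio, if_neg (by omega), if_neg (by omega), if_neg (by omega),
      show m + 1 + (2 * m + 6) = (3 * m + 6) + 1 by ring,
      show m + 2 + (2 * m + 4) = 3 * m + 6 by ring, Nat.factorial_succ (3 * m + 6),
      Nat.factorial_succ (2 * m + 3)]
    push_cast [Nat.factorial_two]
    rw [hf3, hf2]
    have : ((3 * m + 6)! : ℚ) ≠ 0 := by positivity
    field_simp
    ring

lemma prod_telescope (n : ℕ) :
    ∏ k ∈ range n, (((k : ℚ) + 4) / (k + 1)) = (n + 1) * (n + 2) * (n + 3) / 6 := by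
  induction n with
  | zero => norm_num
  | succ n ih =>
    rw [Finset.prod_range_succ, ih]
    push_cast
    field_simp
    ring

lemma prod_rowRatio (m : ℕ) :
    ∏ j ∈ range (2 * m + 5), rowRatio m j =
      ((m : ℚ) + 2) * (2 * m + 5) ^ 2 * (2 * m + 1) * (m + 3) ^ 2 * (m + 4) /
        (9 * (3 * m + 7)) := by
  have hmid : ∏ k ∈ range (2 * m), rowRatio m (3 + k) =
      ∏ k ∈ range (2 * m), (((k : ℚ) + 4) / (k + 1)) := by
    refine Finset.prod_congr rfl fun k hk => ?_
    rw [Finset.mem_range] at hk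
    rw [rowRatio, if_neg (by omega), if_pos (by omega)]
    push_cast
    congr 1 <;> ring
  have h3 : ∏ k ∈ range 3, rowRatio m k = ((m : ℚ) + 2) * (m + 3) * (m + 4) := by
    simp [Finset.prod_range_succ, rowRatio]
    ring
  have hl1 : rowRatio m (2 * m + 3) =
      (2 * m + 5) * (2 * m + 4) / ((2 * m + 2) * (3 * m + 6)) := by
    rw [rowRatio, if_neg (by omega), if_neg (by omega), if_pos rfl]
  have hl2 : rowRatio m (2 * m + 4) =
      (2 * m + 6) * (2 * m + 5) / (2 * (2 * m + 3) * (3 * m + 7)) := by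
    rw [rowRatio, if_neg (by omega), if_neg (by omega), if_neg (by omega)]
  rw [Finset.prod_range_succ, Finset.prod_range_succ, hl1, hl2, add_comm (2 * m) 3,
    Finset.prod_range_add, hmid, h3, prod_telescope]
  push_cast
  field_simp
  ring

/-- For `i₁ = i₂ = 2`, `i_j = 1` for `3 ≤ j ≤ 2s−2` and `i_{2s−1} = i_{2s} = i_{2s+1} = 0`,
the determinant of the `(2s+1)×(2s+1)` matrix with `(j,ℓ)`-entry `r(s − 1 + i_j − j + ℓ)`
equals `(s(2s+1)²(2s−3)(s+1)²(s+2)/(9(3s+1)))·∏_{k=0}^{2s} k!/(s+k)!`. -/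
theorem harris_tu_determinant_sq_sq_theta (s : ℕ) (hs : 2 ≤ s) :
    Matrix.det (Matrix.of fun j ℓ : Fin (2*s + 1) =>
        rfact ((s : ℤ) - 1 +
          (if (j : ℕ) < 2 then 2 else if (j : ℕ) < 2*s - 2 then 1 else 0) +
          (ℓ : ℕ) - (j : ℕ))) =
      (s : ℚ) * (2*(s : ℚ) + 1)^2 * (2*(s : ℚ) - 3) * ((s : ℚ) + 1)^2 * ((s : ℚ) + 2) /
          (9 * (3*(s : ℚ) + 1)) *
        ∏ k ∈ Finset.range (2*s + 1),
          (Nat.factorial k : ℚ) / (Nat.factorial (s + k) : ℚ) := by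
  obtain ⟨m, rfl⟩ := Nat.exists_eq_add_of_le' hs
  -- Reversing rows and columns simultaneously preserves the determinant.
  rw [← Matrix.det_submatrix_equiv_self Fin.revPerm]
  have hM : ∀ M : Matrix (Fin (2 * (m + 2) + 1)) (Fin (2 * (m + 2) + 1)) ℚ,
      M = (Matrix.of fun j c : Fin (2 * (m + 2) + 1) =>
        rfact (((m + 1 + gapSeq m j : ℕ) : ℤ) - (c : ℕ))) →
      M.det = _ := fun M h => h ▸ det_rfact_sub _ (fun j => m + 1 + gapSeq m j)
  rw [hM _ ?_]
  · rw [Finset.prod_congr rfl fun j hj => row_factor m j (by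
      have := Finset.mem_range.1 hj
      omega), Finset.prod_mul_distrib, show 2 * (m + 2) + 1 = 2 * m + 5 by ring, prod_rowRatio]
    push_cast
    congr 1
    congr 1 <;> ring
  · ext j c
    simp only [Matrix.submatrix_apply, Matrix.of_apply, Fin.revPerm_apply, Fin.val_rev]
    congr 1
    have hj := j.2
    have hc := c.2
    unfold gapSeq
    split_ifs <;> omega
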